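/- Under the interpolation setting, let the reweighted gradient descent iterates be θ^{t+1} = θ^t − η·Σ_{i=1}^M w_{i,t} ∇f_i(θ^t) for t = 0,…,T−1, with step size η = 1/(8L√T), where at each step t the weights satisfy w_{i,t} ≥ 0, Σ_{i=1}^M w_{i,t} = 1, and max_i w_{i,t} ≤ 2/M. Then the averaged iterate θ̄^T = (1/T)·Σ_{t=0}^{T−1} θ^t satisfies f(θ̄^T) − f(θ*) ≤ 8L‖θ^0 − θ*‖²/√T + (1/T)·Σ_{t=0}^{T−1} δ_t, where δ_t = Σ_{i=1}^M (1/M − w_{i,t})·(f_i(θ^t) − f_i(θ*)). -/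

import Mathlib

open scoped InnerProductSpace BigOperators

/-!
Under interpolation every reweighted objective `∑ i, w i * F i` is again convex and `L`-smooth, and
all of them share the minimizer `θstar`. A reweighted step is therefore an ordinary gradient step
on such an objective, and it decreases `‖θ - θstar‖ ^ 2` by at least `η` times the current gap.
Telescoping bounds the sum of the reweighted gaps by `‖θ 0 - θstar‖ ^ 2 / η`; the excess `δ` is
exactly the difference between the uniform and the reweighted gap, and Jensen's inequality passes to
the averaged iterate.
-/

theorem norm_sum_smul_le_of_forall_norm_le {V ι : Type*} [SeminormedAddCommGroup V]
    [NormedSpace ℝ V] [Fintype ι] {w : ι → ℝ} (hw0 : ∀ i, 0 ≤ w i) (hw1 : ∑ i, w i = 1)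
    {v : ι → V} {C : ℝ} (hv : ∀ i, ‖v i‖ ≤ C) : ‖∑ i, w i • v i‖ ≤ C := by
  simpa only [mem_closedBall_zero_iff] using (convex_closedBall (0 : V) C).sum_mem
    (fun i _ => hw0 i) hw1 (fun i _ => mem_closedBall_zero_iff.mpr (hv i))

theorem map_average_le_of_convexOn {V : Type*} [AddCommGroup V] [Module ℝ V] {s : Set V}
    {F : V → ℝ} (hF : ConvexOn ℝ s F) {T : ℕ} (hT : T ≠ 0) {x : ℕ → V} (hx : ∀ t < T, x t ∈ s) :
    F ((1 / (T : ℝ)) • ∑ t ∈ Finset.range T, x t) ≤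
      (1 / (T : ℝ)) * ∑ t ∈ Finset.range T, F (x t) := by
  rw [Finset.smul_sum, Finset.mul_sum]
  exact hF.map_sum_le (fun _ _ => by positivity) (by simp [hT])
    (fun t ht => hx t (Finset.mem_range.mp ht))

section Subgradient

variable {E : Type*} [NormedAddCommGroup E] [InnerProductSpace ℝ E]

/-- `G` selects a subgradient of `F` at every point: the first-order form of convexity, with `G`
in the role of the gradient of `F`. -/
def IsSubgradientField (F : E → ℝ) (G : E → E) : Prop :=
  ∀ x y, F x + ⟪G x, y - x⟫_ℝ ≤ F y

namespace IsSubgradientField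

variable {F : E → ℝ} {G : E → E}

theorem convexOn (hG : IsSubgradientField F G) : ConvexOn ℝ Set.univ F := by
  refine ⟨convex_univ, fun x _ y _ a b ha hb hab => ?_⟩
  set m := a • x + b • y with hm
  have tangent_x := mul_le_mul_of_nonneg_left (hG m x) ha
  have tangent_y := mul_le_mul_of_nonneg_left (hG m y) hb
  have inner_cancel : a * ⟪G m, x - m⟫_ℝ + b * ⟪G m, y - m⟫_ℝ = 0 := by
    rw [← real_inner_smul_right, ← real_inner_smul_right, ← inner_add_right, smul_sub, smul_sub,
      sub_add_sub_comm, ← hm, ← add_smul, hab, one_smul, sub_self, inner_zero_right]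
  have weights : a * F m + b * F m = F m := by rw [← add_mul, hab, one_mul]
  simp only [smul_eq_mul]
  linarith

theorem weightedSum {ι : Type*} [Fintype ι] {F : ι → E → ℝ} {G : ι → E → E}
    (hG : ∀ i, IsSubgradientField (F i) (G i)) {w : ι → ℝ} (hw : ∀ i, 0 ≤ w i) :
    IsSubgradientField (fun x => ∑ i, w i * F i x) (fun x => ∑ i, w i • G i x) := by
  intro x y
  simp only [sum_inner, real_inner_smul_left, ← Finset.sum_add_distrib, ← mul_add]
  gcongr with i
  · exact hw i
  · exact hG i x y

-- Replacing `G y` by `G x` in the tangent inequality at `y` costs `L * ‖y - x‖ ^ 2`; the sharp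
-- constant `L / 2` would take an integration along the segment.
theorem le_add_inner_add_mul_sq (hG : IsSubgradientField F G) {L : ℝ} {x y : E}
    (hL : ‖G y - G x‖ ≤ L * ‖y - x‖) :
    F y ≤ F x + ⟪G x, y - x⟫_ℝ + L * ‖y - x‖ ^ 2 := by
  have tangent : F y - ⟪G y, y - x⟫_ℝ ≤ F x := by
    simpa only [← neg_sub y x, inner_neg_right, ← sub_eq_add_neg] using hG y x
  have gradient_change : ⟪G y, y - x⟫_ℝ - ⟪G x, y - x⟫_ℝ ≤ L * ‖y - x‖ ^ 2 := calc
    _ = ⟪G y - G x, y - x⟫_ℝ := (inner_sub_left _ _ _).symm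
    _ ≤ ‖G y - G x‖ * ‖y - x‖ := real_inner_le_norm _ _
    _ ≤ L * ‖y - x‖ * ‖y - x‖ := by gcongr
    _ = L * ‖y - x‖ ^ 2 := by ring
  linarith

theorem sq_norm_le_of_forall_le (hG : IsSubgradientField F G) {L : ℝ} (hL : 0 < L)
    (hLip : ∀ x y, ‖G x - G y‖ ≤ L * ‖x - y‖) {m : ℝ} (hm : ∀ x, m ≤ F x) (x : E) :
    ‖G x‖ ^ 2 ≤ 4 * L * (F x - m) := by
  -- The step length `1 / (2 * L)` minimizes the quadratic upper bound.
  set y := x - (1 / (2 * L)) • G x with hy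
  have hyx : y - x = -((1 / (2 * L)) • G x) := by rw [hy]; abel
  have decrease : F y ≤ F x - ‖G x‖ ^ 2 / (4 * L) := calc
    F y ≤ F x + ⟪G x, y - x⟫_ℝ + L * ‖y - x‖ ^ 2 := hG.le_add_inner_add_mul_sq (hLip y x)
    _ = F x - ‖G x‖ ^ 2 / (4 * L) := by
      rw [hyx, inner_neg_right, real_inner_smul_right, real_inner_self_eq_norm_sq, norm_neg,
        norm_smul, Real.norm_of_nonneg (by positivity)]
      field_simp
      ring
  rw [← div_le_iff₀' (by positivity)]
  linarith [hm y]

theorem sq_dist_gradientStep_le (hG : IsSubgradientField F G) {L : ℝ} (hL : 0 < L)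
    (hLip : ∀ x y, ‖G x - G y‖ ≤ L * ‖x - y‖) {z : E} (hz : ∀ x, F z ≤ F x)
    {η : ℝ} (hη : 0 ≤ η) (hηL : 4 * L * η ≤ 1) (x : E) :
    ‖x - η • G x - z‖ ^ 2 ≤ ‖x - z‖ ^ 2 - η * (F x - F z) := by
  have gap_le_inner : F x - F z ≤ ⟪x - z, G x⟫_ℝ := by
    have tangent := hG x z
    rw [← neg_sub x z, inner_neg_right, real_inner_comm] at tangent
    linarith
  have gradient_le_gap : η * ‖G x‖ ^ 2 ≤ F x - F z := calc
    η * ‖G x‖ ^ 2 ≤ η * (4 * L * (F x - F z)) := by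
      gcongr
      exact hG.sq_norm_le_of_forall_le hL hLip hz x
    _ = 4 * L * η * (F x - F z) := by ring
    _ ≤ F x - F z := mul_le_of_le_one_left (sub_nonneg.mpr (hz x)) hηL
  calc ‖x - η • G x - z‖ ^ 2
      = ‖x - z‖ ^ 2 - 2 * (η * ⟪x - z, G x⟫_ℝ) + η * (η * ‖G x‖ ^ 2) := by
        rw [sub_right_comm, norm_sub_sq_real, real_inner_smul_right, norm_smul,
          Real.norm_of_nonneg hη]
        ring
    _ ≤ ‖x - z‖ ^ 2 - 2 * (η * (F x - F z)) + η * (F x - F z) := by gcongr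
    _ = ‖x - z‖ ^ 2 - η * (F x - F z) := by ring

theorem sum_gap_le_of_gradientSteps {F : ℕ → E → ℝ} {G : ℕ → E → E}
    (hG : ∀ t, IsSubgradientField (F t) (G t)) {L : ℝ} (hL : 0 < L)
    (hLip : ∀ t x y, ‖G t x - G t y‖ ≤ L * ‖x - y‖) {z : E} (hz : ∀ t x, F t z ≤ F t x)
    {η : ℝ} (hη : 0 < η) (hηL : 4 * L * η ≤ 1) {T : ℕ} {x : ℕ → E}
    (hstep : ∀ t < T, x (t + 1) = x t - η • G t (x t)) :
    ∑ t ∈ Finset.range T, (F t (x t) - F t z) ≤ ‖x 0 - z‖ ^ 2 / η := by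
  rw [le_div_iff₀' hη, Finset.mul_sum]
  calc ∑ t ∈ Finset.range T, η * (F t (x t) - F t z)
      ≤ ∑ t ∈ Finset.range T, (‖x t - z‖ ^ 2 - ‖x (t + 1) - z‖ ^ 2) := by
        gcongr with t ht
        rw [hstep t (Finset.mem_range.mp ht)]
        linarith [(hG t).sq_dist_gradientStep_le hL (hLip t) (hz t) hη.le hηL (x t)]
    _ = ‖x 0 - z‖ ^ 2 - ‖x T - z‖ ^ 2 := Finset.sum_range_sub' (fun t => ‖x t - z‖ ^ 2) T
    _ ≤ ‖x 0 - z‖ ^ 2 := sub_le_self _ (sq_nonneg _)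

end IsSubgradientField

theorem weightedSum_gap_eq_add_excess {X ι : Type*} [Fintype ι] (F : ι → X → ℝ) (p w : ι → ℝ)
    (x z : X) :
    ∑ i, p i * F i x - ∑ i, p i * F i z =
      (∑ i, w i * F i x - ∑ i, w i * F i z) + ∑ i, (p i - w i) * (F i x - F i z) := by
  simp only [sub_mul, mul_sub, Finset.sum_sub_distrib]
  ring

theorem stmt_8_general {ι : Type*} [Fintype ι] {F : ι → E → ℝ} {G : ι → E → E}
    (hG : ∀ i, IsSubgradientField (F i) (G i)) {L : ℝ} (hL : 0 < L)
    (hLip : ∀ i x y, ‖G i x - G i y‖ ≤ L * ‖x - y‖) {z : E} (hz : ∀ i x, F i z ≤ F i x)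
    {p : ι → ℝ} (hp : ∀ i, 0 ≤ p i) {w : ℕ → ι → ℝ} (hw0 : ∀ t i, 0 ≤ w t i)
    (hw1 : ∀ t, ∑ i, w t i = 1) {η : ℝ} (hη : 0 < η) (hηL : 4 * L * η ≤ 1) {T : ℕ} (hT : T ≠ 0)
    {x : ℕ → E} (hstep : ∀ t < T, x (t + 1) = x t - η • ∑ i, w t i • G i (x t)) :
    ∑ i, p i * F i ((1 / (T : ℝ)) • ∑ t ∈ Finset.range T, x t) - ∑ i, p i * F i z ≤
      ‖x 0 - z‖ ^ 2 / (η * T) +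
        (1 / (T : ℝ)) * ∑ t ∈ Finset.range T, ∑ i, (p i - w t i) * (F i (x t) - F i z) := by
  set Φ : (ι → ℝ) → E → ℝ := fun v y => ∑ i, v i * F i y
  have reweighted_gaps : ∑ t ∈ Finset.range T, (Φ (w t) (x t) - Φ (w t) z) ≤ ‖x 0 - z‖ ^ 2 / η := by
    refine IsSubgradientField.sum_gap_le_of_gradientSteps
      (fun t => IsSubgradientField.weightedSum hG (hw0 t)) hL (fun t a b => ?_)
      (fun t a => Finset.sum_le_sum fun i _ => mul_le_mul_of_nonneg_left (hz i a) (hw0 t i))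
      hη hηL hstep
    simp only [← Finset.sum_sub_distrib, ← smul_sub]
    exact norm_sum_smul_le_of_forall_norm_le (hw0 t) (hw1 t) (fun i => hLip i a b)
  calc Φ p ((1 / (T : ℝ)) • ∑ t ∈ Finset.range T, x t) - Φ p z
      ≤ (1 / (T : ℝ)) * ∑ t ∈ Finset.range T, Φ p (x t) - Φ p z := by
        gcongr
        exact map_average_le_of_convexOn (IsSubgradientField.weightedSum hG hp).convexOn hT
          fun _ _ => Set.mem_univ _
    _ = (1 / (T : ℝ)) * ∑ t ∈ Finset.range T, (Φ p (x t) - Φ p z) := by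
        rw [Finset.sum_sub_distrib, Finset.sum_const, Finset.card_range, nsmul_eq_mul]
        field_simp
    _ = (1 / (T : ℝ)) * ∑ t ∈ Finset.range T, (Φ (w t) (x t) - Φ (w t) z) +
          (1 / (T : ℝ)) * ∑ t ∈ Finset.range T, ∑ i, (p i - w t i) * (F i (x t) - F i z) := by
        rw [← mul_add, ← Finset.sum_add_distrib]
        simp only [Φ, ← weightedSum_gap_eq_add_excess F p]
    _ ≤ (1 / (T : ℝ)) * (‖x 0 - z‖ ^ 2 / η) + _ := by gcongr
    _ = ‖x 0 - z‖ ^ 2 / (η * T) + _ := by rw [one_div_mul_eq_div, div_div]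

end Subgradient

theorem four_mul_mul_one_div_eight_mul_sqrt_le_one {L : ℝ} (hL : 0 < L) {T : ℕ} (hT : 1 ≤ T) :
    4 * L * (1 / (8 * L * Real.sqrt T)) ≤ 1 := by
  have one_le_sqrt : 1 ≤ Real.sqrt T := Real.one_le_sqrt.mpr (by exact_mod_cast hT)
  rw [mul_one_div, div_le_one (by positivity)]
  nlinarith

theorem div_one_div_mul_sqrt_mul_self (a b : ℝ) (T : ℕ) :
    a / (1 / (b * Real.sqrt T) * T) = b * a / Real.sqrt T := by
  rw [one_div_mul_eq_div, div_div_eq_mul_div, ← mul_assoc, mul_div_assoc, Real.sqrt_div_self',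
    mul_one_div, mul_comm a b]

/-- Reweighted full-batch gradient descent with step size `η = 1/(8L√T)` under
the interpolation regime: `O(1/√T)` convergence bound for the averaged iterate
with the reweighting excess terms `δ_t`. -/
theorem stmt_8 {d M : ℕ} (hM : 0 < M) (L : ℝ) (hL : 0 < L)
    (f : Fin M → EuclideanSpace ℝ (Fin d) → ℝ)
    (hdiff : ∀ i, Differentiable ℝ (f i))
    (hconv : ∀ i, ∀ θ₁ θ₂ : EuclideanSpace ℝ (Fin d),
      f i θ₂ + ⟪gradient (f i) θ₂, θ₁ - θ₂⟫_ℝ ≤ f i θ₁)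
    (hsmooth : ∀ i, ∀ θ θ' : EuclideanSpace ℝ (Fin d),
      ‖gradient (f i) θ - gradient (f i) θ'‖ ≤ L * ‖θ - θ'‖)
    (θstar : EuclideanSpace ℝ (Fin d))
    (hinterp : ∀ i θ, f i θstar ≤ f i θ)
    (w : ℕ → Fin M → ℝ)
    (hw0 : ∀ t i, 0 ≤ w t i)
    (hw1 : ∀ t, ∑ i, w t i = 1)
    (hwmax : ∀ t i, w t i ≤ 2 / (M : ℝ))
    (T : ℕ) (hT : 1 ≤ T)
    (η : ℝ) (hη : η = 1 / (8 * L * Real.sqrt T))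
    (θ : ℕ → EuclideanSpace ℝ (Fin d))
    (hupd : ∀ t < T, θ (t + 1) = θ t - η • ∑ i, w t i • gradient (f i) (θ t)) :
    (1 / (M : ℝ)) * ∑ i, f i ((1 / (T : ℝ)) • ∑ t ∈ Finset.range T, θ t)
        - (1 / (M : ℝ)) * ∑ i, f i θstar
      ≤ 8 * L * ‖θ 0 - θstar‖ ^ 2 / Real.sqrt T
        + (1 / (T : ℝ)) * ∑ t ∈ Finset.range T,
            ∑ i, ((1 / (M : ℝ)) - w t i) * (f i (θ t) - f i θstar) := by
  subst hη
  simpa only [Finset.mul_sum, div_one_div_mul_sqrt_mul_self] using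
    stmt_8_general (p := fun _ => 1 / (M : ℝ)) (fun i x y => hconv i y x) hL hsmooth hinterp
      (fun _ => by positivity) hw0 hw1 (by positivity)
      (four_mul_mul_one_div_eight_mul_sqrt_le_one hL hT) (Nat.one_le_iff_ne_zero.mp hT) hupd
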